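/- arXiv:2103.09715 — 2 statements merged into one kernel-verified Lean document; each statement's English description precedes it below -/
import Mathlib

section
/- If a graph G admits a tree H-decomposition of width k and every graph in the class H has treewidth at most d, then the treewidth of G is at most d + k + 1. -/
/-- A class of graphs: a predicate on simple graphs over every vertex type. -/
def GraphClass : Type 1 := ∀ (V : Type), SimpleGraph V → Prop

/-- A tree decomposition of a graph `G`. -/
structure TreeDecomp {V : Type} (G : SimpleGraph V) (T : Type) (Tg : SimpleGraph T) : Type where
  bag : T → Set V
  isTree : Tg.Connected ∧ Tg.IsAcyclic
  bags_cover : ∀ v : V, ∃ t : T, v ∈ bag t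
  edges_covered : ∀ ⦃u v : V⦄, G.Adj u v → ∃ t : T, u ∈ bag t ∧ v ∈ bag t
  bags_connected : ∀ v : V, (Tg.induce {t : T | v ∈ bag t}).Connected

/-- A tree `H`-decomposition: a tree decomposition together with a set `base` of base vertices,
each of which occurs in a unique bag, which is a leaf bag, and such that for each node `t`
the graph induced on the base vertices of its bag belongs to `H`. -/
structure THDecomp (H : GraphClass) {V : Type} (G : SimpleGraph V) (T : Type)
    (Tg : SimpleGraph T) extends TreeDecomp G T Tg : Type where
  base : Set V
  base_unique : ∀ v ∈ base, ∃! t : T, v ∈ bag t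
  base_leaf : ∀ v ∈ base, ∀ t : T, v ∈ bag t → (Tg.neighborSet t).Subsingleton
  base_in_H : ∀ t : T, H _ (G.induce (bag t ∩ base))

namespace SimpleGraph

/-- A map sending adjacent vertices to reachable ones preserves reachability. -/
theorem Reachable.of_forall_adj {V W : Type*} {G : SimpleGraph V} {G' : SimpleGraph W} (f : V → W)
    (hf : ∀ x y, G.Adj x y → G'.Reachable (f x) (f y)) {x y : V} (h : G.Reachable x y) :
    G'.Reachable (f x) (f y) := by
  obtain ⟨w⟩ := h
  induction w with
  | nil => exact Reachable.refl _
  | cons hadj _ ih => exact (hf _ _ hadj).trans ih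

section RootedSum

variable {T : Type*} {S : T → Type*}

/-- Adjacency in the graph obtained from `Tg` by attaching to each vertex `t` a copy of `Sg t` in
such a way that the roots `r t` span a copy of `Tg`. -/
inductive RootedSumAdj (Tg : SimpleGraph T) (Sg : ∀ t, SimpleGraph (S t)) (r : ∀ t, S t) :
    (Σ t, S t) → (Σ t, S t) → Prop
  | fiber (t : T) (a b : S t) (h : (Sg t).Adj a b) : RootedSumAdj Tg Sg r ⟨t, a⟩ ⟨t, b⟩
  | root (t u : T) (h : Tg.Adj t u) : RootedSumAdj Tg Sg r ⟨t, r t⟩ ⟨u, r u⟩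

/-- The disjoint union of the graphs `Sg t`, with the roots joined according to `Tg`. -/
def rootedSum (Tg : SimpleGraph T) (Sg : ∀ t, SimpleGraph (S t)) (r : ∀ t, S t) :
    SimpleGraph (Σ t, S t) where
  Adj := RootedSumAdj Tg Sg r
  symm := ⟨by
    rintro _ _ (⟨t, a, b, h⟩ | ⟨t, u, h⟩)
    · exact .fiber t b a h.symm
    · exact .root u t h.symm⟩
  loopless := ⟨by
    intro x h
    generalize hy : x = y at h
    cases h with
    | fiber t a b h =>
      cases hy
      exact h.ne rfl
    | root t u h =>
      cases hy
      exact h.ne rfl⟩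

variable {Tg : SimpleGraph T} {Sg : ∀ t, SimpleGraph (S t)} {r : ∀ t, S t}

theorem connected_induce_rootedSum (hS : ∀ t, (Sg t).Connected) {A : Set T}
    (hA : (Tg.induce A).Connected) :
    ((rootedSum Tg Sg r).induce {x : Σ t, S t | x.1 ∈ A}).Connected := by
  have fiber : ∀ (t : T) (ht : t ∈ A) (a : S t),
      ((rootedSum Tg Sg r).induce {x : Σ t, S t | x.1 ∈ A}).Reachable ⟨⟨t, a⟩, ht⟩ ⟨⟨t, r t⟩, ht⟩ := by
    intro t ht a
    exact Reachable.of_forall_adj (G := Sg t)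
      (G' := (rootedSum Tg Sg r).induce {x : Σ t, S t | x.1 ∈ A})
      (fun b => ⟨⟨t, b⟩, ht⟩)
      (fun b c hbc => Adj.reachable (RootedSumAdj.fiber t b c hbc)) ((hS t).preconnected a (r t))
  have root : ∀ t u : A, ((rootedSum Tg Sg r).induce {x : Σ t, S t | x.1 ∈ A}).Reachable
      ⟨⟨t, r t⟩, t.2⟩ ⟨⟨u, r u⟩, u.2⟩ := by
    intro t u
    exact Reachable.of_forall_adj (G := Tg.induce A)
      (G' := (rootedSum Tg Sg r).induce {x : Σ t, S t | x.1 ∈ A})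
      (fun t => ⟨⟨t, r t⟩, t.2⟩)
      (fun t u h => Adj.reachable (RootedSumAdj.root t.1 u.1 h)) (hA.preconnected t u)
  obtain ⟨t₀⟩ := hA.nonempty
  refine { preconnected := ?_, nonempty := ⟨⟨⟨t₀, r t₀⟩, t₀.2⟩⟩ }
  rintro ⟨⟨t, a⟩, ht⟩ ⟨⟨u, b⟩, hu⟩
  exact (fiber t ht a).trans ((root ⟨t, ht⟩ ⟨u, hu⟩).trans (fiber u hu b).symm)

theorem connected_induce_rootedSum_fiber {t : T} {B : Set (S t)}
    (hB : ((Sg t).induce B).Connected) :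
    ((rootedSum Tg Sg r).induce (Sigma.mk t '' B)).Connected := by
  obtain ⟨b₀⟩ := hB.nonempty
  refine { preconnected := ?_, nonempty := ⟨⟨⟨t, b₀⟩, b₀, b₀.2, rfl⟩⟩ }
  rintro ⟨_, a, ha, rfl⟩ ⟨_, b, hb, rfl⟩
  exact Reachable.of_forall_adj (G := (Sg t).induce B)
    (G' := (rootedSum Tg Sg r).induce (Sigma.mk t '' B)) (fun c => ⟨⟨t, c⟩, c, c.2, rfl⟩)
    (fun c d hcd => Adj.reachable (RootedSumAdj.fiber t c.1 d.1 hcd))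
    (hB.preconnected ⟨a, ha⟩ ⟨b, hb⟩)

theorem Connected.rootedSum (hT : Tg.Connected) (hS : ∀ t, (Sg t).Connected) :
    (rootedSum Tg Sg r).Connected :=
  (induceUnivIso _).connected_iff.1
    (connected_induce_rootedSum hS ((induceUnivIso Tg).connected_iff.2 hT))

theorem IsAcyclic.rootedSum (hT : Tg.IsAcyclic) (hS : ∀ t, (Sg t).IsAcyclic) :
    (rootedSum Tg Sg r).IsAcyclic := by
  classical
  rw [isAcyclic_iff_forall_adj_isBridge]
  rintro _ _ (⟨t, a, b, hab⟩ | ⟨t, u, htu⟩)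
  · have hbr := isAcyclic_iff_forall_adj_isBridge.1 (hS t) hab
    rw [isBridge_iff] at hbr ⊢
    intro hreach
    apply hbr
    let p : (Σ t, S t) → S t := fun x => if h : x.1 = t then h ▸ x.2 else r t
    have hp : ∀ c : S t, p ⟨t, c⟩ = c := fun c => by simp [p]
    have hr : ∀ u, p ⟨u, r u⟩ = r t := by
      intro u
      by_cases h : u = t
      · subst h; simp [p]
      · simp [p, h]
    have hpo : ∀ u (c : S u), u ≠ t → p ⟨u, c⟩ = r t := fun u c h => by simp [p, h]
    have key := Reachable.of_forall_adj (G' := (Sg t).deleteEdges {s(a, b)}) p ?_ hreach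
    · rwa [hp, hp] at key
    · intro x y hxy
      rw [deleteEdges_adj] at hxy
      obtain ⟨hadj, hne⟩ := hxy
      rcases hadj with ⟨u, c, d, hcd⟩ | ⟨u, v, huv⟩
      · by_cases h : u = t
        · subst h
          rw [hp, hp]
          refine Adj.reachable (deleteEdges_adj.2 ⟨hcd, fun he => hne ?_⟩)
          simpa using he
        · rw [hpo u c h, hpo u d h]
      · rw [hr, hr]
  · have hbr := isAcyclic_iff_forall_adj_isBridge.1 hT htu
    rw [isBridge_iff] at hbr ⊢
    intro hreach
    apply hbr
    refine Reachable.of_forall_adj (G' := Tg.deleteEdges {s(t, u)}) Sigma.fst ?_ hreach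
    intro x y hxy
    rw [deleteEdges_adj] at hxy
    obtain ⟨hadj, hne⟩ := hxy
    rcases hadj with ⟨u, c, d, hcd⟩ | ⟨v, w, hvw⟩
    · exact Reachable.refl _
    · refine Adj.reachable (deleteEdges_adj.2 ⟨hvw, fun he => hne ?_⟩)
      have he' : s(v, w) = s(t, u) := he
      exact congrArg (Sym2.map fun t => (⟨t, r t⟩ : Σ t, S t)) he'

end RootedSum

end SimpleGraph

/-- Given tree decompositions of the graphs induced on the base vertices of each bag, refine a tree
`H`-decomposition to a tree decomposition, adding the non-base vertices of a bag to every bag of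
the decomposition of its base part. -/
def THDecomp.refine {H : GraphClass} {V : Type} {G : SimpleGraph V} {T : Type}
    {Tg : SimpleGraph T} (D : THDecomp H G T Tg) {S : T → Type} {Sg : ∀ t, SimpleGraph (S t)}
    (E : ∀ t, TreeDecomp (G.induce (D.bag t ∩ D.base)) (S t) (Sg t)) (r : ∀ t, S t) :
    TreeDecomp G (Σ t, S t) (SimpleGraph.rootedSum Tg Sg r) where
  bag x := (D.bag x.1 \ D.base) ∪ Subtype.val '' (E x.1).bag x.2
  isTree := ⟨D.isTree.1.rootedSum fun t => (E t).isTree.1,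
    D.isTree.2.rootedSum fun t => (E t).isTree.2⟩
  bags_cover v := by
    obtain ⟨t, ht⟩ := D.bags_cover v
    by_cases hv : v ∈ D.base
    · obtain ⟨s, hs⟩ := (E t).bags_cover ⟨v, ht, hv⟩
      exact ⟨⟨t, s⟩, .inr ⟨_, hs, rfl⟩⟩
    · exact ⟨⟨t, r t⟩, .inl ⟨ht, hv⟩⟩
  edges_covered u v huv := by
    obtain ⟨t, hu, hv⟩ := D.edges_covered huv
    by_cases hub : u ∈ D.base <;> by_cases hvb : v ∈ D.base
    · obtain ⟨s, hs, hs'⟩ := (E t).edges_covered (u := ⟨u, hu, hub⟩) (v := ⟨v, hv, hvb⟩) huv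
      exact ⟨⟨t, s⟩, .inr ⟨_, hs, rfl⟩, .inr ⟨_, hs', rfl⟩⟩
    · obtain ⟨s, hs⟩ := (E t).bags_cover ⟨u, hu, hub⟩
      exact ⟨⟨t, s⟩, .inr ⟨_, hs, rfl⟩, .inl ⟨hv, hvb⟩⟩
    · obtain ⟨s, hs⟩ := (E t).bags_cover ⟨v, hv, hvb⟩
      exact ⟨⟨t, s⟩, .inl ⟨hu, hub⟩, .inr ⟨_, hs, rfl⟩⟩
    · exact ⟨⟨t, r t⟩, .inl ⟨hu, hub⟩, .inl ⟨hv, hvb⟩⟩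
  bags_connected v := by
    by_cases hv : v ∈ D.base
    · obtain ⟨t, ht, huniq⟩ := D.base_unique v hv
      convert SimpleGraph.connected_induce_rootedSum_fiber (Tg := Tg) (r := r)
        ((E t).bags_connected ⟨v, ht, hv⟩) using 2
      all_goals
        ext ⟨u, s⟩
        constructor
        · rintro (h | ⟨w, hw, rfl⟩)
          · exact absurd hv h.2
          · obtain rfl := huniq u w.2.1
            exact ⟨s, hw, rfl⟩
        · rintro ⟨s', hs', h⟩
          cases h
          exact .inr ⟨_, hs', rfl⟩
    · convert SimpleGraph.connected_induce_rootedSum (Sg := Sg) (r := r)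
        (fun t => (E t).isTree.1) (D.bags_connected v) using 2
      all_goals
        ext ⟨u, s⟩
        constructor
        · rintro (h | ⟨w, hw, rfl⟩)
          · exact h.1
          · exact absurd w.2.2 hv
        · exact fun h => .inl ⟨h, hv⟩

/-- If a graph `G` admits a tree `H`-decomposition of width `k` (every bag has at most `k + 1`
non-base vertices) and every graph in the class `H` has treewidth at most `d` (it admits a tree
decomposition with all bags of size at most `d + 1`), then the treewidth of `G` is at most
`d + k + 1`. -/
theorem treewidth_le_of_tree_H_decomposition (H : GraphClass)
    {V : Type} [Fintype V] (G : SimpleGraph V)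
    (T : Type) (Tg : SimpleGraph T) (D : THDecomp H G T Tg) (k d : ℕ)
    (hwidth : ∀ t : T, (D.bag t \ D.base).ncard ≤ k + 1)
    (hH : ∀ (α : Type) [Fintype α] (G' : SimpleGraph α), H α G' →
      ∃ (S : Type) (Sg : SimpleGraph S) (D' : TreeDecomp G' S Sg),
        ∀ s : S, (D'.bag s).ncard ≤ d + 1) :
    ∃ (S : Type) (Sg : SimpleGraph S) (D' : TreeDecomp G S Sg),
      ∀ s : S, (D'.bag s).ncard ≤ (d + k + 1) + 1 := by
  have hE (t : T) := @hH _ (Fintype.ofFinite _) _ (D.base_in_H t)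
  choose S Sg E hE using hE
  refine ⟨_, _, D.refine E fun t => (E t).isTree.1.nonempty.some, fun x => ?_⟩
  have h₁ := Set.ncard_union_le (D.bag x.1 \ D.base) (Subtype.val '' (E x.1).bag x.2)
  have h₂ := Set.ncard_image_le (f := Subtype.val) ((E x.1).bag x.2).toFinite
  have h₃ := hwidth x.1
  have h₄ := hE x.1 x.2
  simp only [THDecomp.refine]
  omega
end

section
/- Let G be a graph, let (A,X,B) be a tri-separation of G, and let M ⊆ B be a module of G. If G[X ∪ B] is an interval graph, then every obstruction in G contains at most one vertex of M; moreover, for every obstruction S intersecting M and every v ∈ M, the set (S \ M) ∪ {v} is also an obstruction. -/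
/-- `G` is an interval graph: the vertices can be assigned closed intervals
`[lp v, rp v]` on the real line (with `lp v < rp v`) such that two distinct vertices
are adjacent if and only if their intervals intersect. -/
def IsIntervalGraph {α : Type} (G : SimpleGraph α) : Prop :=
  ∃ lp rp : α → ℝ, (∀ x : α, lp x < rp x) ∧
    ∀ u v : α, u ≠ v →
      (G.Adj u v ↔ (Set.Icc (lp u) (rp u) ∩ Set.Icc (lp v) (rp v)).Nonempty)

/-- An obstruction in `G`: an inclusion-minimal vertex set `S` such that `G[S]` is not an
interval graph. -/
def IsObstruction {α : Type} (G : SimpleGraph α) (S : Set α) : Prop :=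
  ¬ IsIntervalGraph (G.induce S) ∧ ∀ S' : Set α, S' ⊂ S → IsIntervalGraph (G.induce S')

/-- `M` is a module of `G`: all vertices of `M` have the same neighborhood outside `M`. -/
def IsModule {α : Type} (G : SimpleGraph α) (M : Set α) : Prop :=
  ∀ u ∈ M, ∀ v ∈ M, ∀ w : α, w ∉ M → (G.Adj u w ↔ G.Adj v w)

open Filter Topology in
/-- Finitely many positive reals are bounded below by a positive real. -/
theorem exists_pos_forall_lt_of_finite {ι : Type*} [Finite ι] (f : ι → ℝ) :
    ∃ ε > 0, ∀ i, 0 < f i → 2 * ε < f i := by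
  have h : ∀ᶠ ε in 𝓝[>] (0 : ℝ), ∀ i, 0 < f i → 2 * ε < f i := by
    refine eventually_all.2 fun i => ?_
    by_cases hi : 0 < f i
    · filter_upwards [Ioo_mem_nhdsGT (half_pos hi)] with ε hε _
      linarith [hε.2]
    · exact Eventually.of_forall fun _ h => absurd h hi
  obtain ⟨ε, hε, hpos⟩ := (h.and self_mem_nhdsWithin).exists
  exact ⟨ε, hpos, hε⟩

/-- `G[S]` is an interval graph, with the interval endpoints given on the whole vertex type. -/
def IsIntervalOn {α : Type} (G : SimpleGraph α) (S : Set α) : Prop :=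
  ∃ l r : α → ℝ, (∀ x, l x < r x) ∧
    ∀ u ∈ S, ∀ v ∈ S, u ≠ v → (G.Adj u v ↔ l u ≤ r v ∧ l v ≤ r u)

theorem Icc_inter_Icc_nonempty_iff {a b c d : ℝ} (hab : a < b) (hcd : c < d) :
    (Set.Icc a b ∩ Set.Icc c d).Nonempty ↔ a ≤ d ∧ c ≤ b := by
  rw [Set.Icc_inter_Icc, Set.nonempty_Icc, sup_le_iff, le_inf_iff, le_inf_iff]
  exact ⟨fun h => ⟨h.1.2, h.2.1⟩, fun h => ⟨⟨hab.le, h.1⟩, ⟨h.2, hcd.le⟩⟩⟩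

theorem isIntervalGraph_induce_iff {α : Type} {G : SimpleGraph α} {S : Set α} :
    IsIntervalGraph (G.induce S) ↔ IsIntervalOn G S := by
  classical
  constructor
  · rintro ⟨l, r, hlr, h⟩
    refine ⟨fun x => if hx : x ∈ S then l ⟨x, hx⟩ else 0,
      fun x => if hx : x ∈ S then r ⟨x, hx⟩ else 1, fun x => ?_, fun u hu v hv huv => ?_⟩
    · by_cases hx : x ∈ S <;> simp [hx, hlr]
    · have := h ⟨u, hu⟩ ⟨v, hv⟩ (by simpa using huv)
      rw [Icc_inter_Icc_nonempty_iff (hlr _) (hlr _)] at this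
      simpa [hu, hv] using this
  · rintro ⟨l, r, hlr, h⟩
    refine ⟨fun x => l x, fun x => r x, fun x => hlr x, fun u v huv => ?_⟩
    rw [Icc_inter_Icc_nonempty_iff (hlr _) (hlr _)]
    exact h u u.2 v v.2 fun e => huv (Subtype.ext e)

namespace IsIntervalOn

variable {α : Type} {G : SimpleGraph α} {S T M : Set α}

theorem of_injOn {f : α → α} (hT : IsIntervalOn G T) (hf : Set.MapsTo f S T)
    (hinj : Set.InjOn f S) (hadj : ∀ u ∈ S, ∀ v ∈ S, G.Adj u v ↔ G.Adj (f u) (f v)) :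
    IsIntervalOn G S := by
  obtain ⟨l, r, hlr, h⟩ := hT
  exact ⟨l ∘ f, r ∘ f, fun x => hlr _, fun u hu v hv huv =>
    (hadj u hu v hv).trans (h _ (hf hu) _ (hf hv) fun e => huv (hinj hu hv e))⟩

theorem mono (hT : IsIntervalOn G T) (h : S ⊆ T) : IsIntervalOn G S :=
  hT.of_injOn (f := id) h Function.injective_id.injOn fun _ _ _ _ => Iff.rfl

/-- An interval graph has no induced four-cycle `a c b d`. -/
theorem false_of_cycle (hS : IsIntervalOn G S) {a b c d : α} (ha : a ∈ S) (hb : b ∈ S)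
    (hc : c ∈ S) (hd : d ∈ S) (hab : a ≠ b) (hcd : c ≠ d) (nab : ¬ G.Adj a b)
    (ncd : ¬ G.Adj c d) (hac : G.Adj a c) (had : G.Adj a d) (hbc : G.Adj b c)
    (hbd : G.Adj b d) : False := by
  obtain ⟨l, r, hlr, h⟩ := hS
  rw [h a ha b hb hab, not_and_or, not_le, not_le] at nab
  rw [h c hc d hd hcd, not_and_or, not_le, not_le] at ncd
  rw [h a ha c hc hac.ne] at hac
  rw [h a ha d hd had.ne] at had
  rw [h b hb c hc hbc.ne] at hbc
  rw [h b hb d hd hbd.ne] at hbd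
  rcases nab with nab | nab <;> rcases ncd with ncd | ncd <;> linarith

/-- Adding a true twin preserves interval graphs. -/
theorem of_twin {u v : α} (hS : IsIntervalOn G (S \ {v})) (hu : u ∈ S) (huv : G.Adj u v)
    (htwin : ∀ w ∈ S, w ≠ u → w ≠ v → (G.Adj v w ↔ G.Adj u w)) : IsIntervalOn G S := by
  classical
  obtain ⟨l, r, hlr, h⟩ := hS
  refine ⟨fun x => if x = v then l u else l x, fun x => if x = v then r u else r x,
    fun x => by dsimp only; split_ifs <;> exact hlr _, fun x hx y hy hxy => ?_⟩
  have hu' : u ∈ S \ {v} := ⟨hu, huv.ne⟩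
  by_cases hxv : x = v
  · subst hxv
    have hyx : y ≠ x := hxy.symm
    by_cases hyu : y = u
    · subst hyu
      simp [hyx, huv.symm, (hlr y).le]
    · simpa [hyx] using (htwin y hy hyu hyx).trans (h u hu' y ⟨hy, hyx⟩ (Ne.symm hyu))
  · by_cases hyv : y = v
    · subst hyv
      by_cases hxu : x = u
      · subst hxu
        simp [hxv, huv, (hlr x).le]
      · simpa [hxv, G.adj_comm x] using
          (htwin x hx hxu hxv).trans ((G.adj_comm _ _).trans (h x ⟨hx, hxv⟩ u hu' hxu))
    · simpa [hxv, hyv] using h x ⟨hx, hxv⟩ y ⟨hy, hyv⟩ hxy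

/-- Substituting an interval graph for a vertex whose neighborhood is a clique preserves
interval graphs. -/
theorem of_module [Finite α] (hM : IsModule G M) {m : α} (hm : m ∈ M)
    (hclique : ∀ c ∈ S \ M, ∀ d ∈ S \ M, c ≠ d → G.Adj m c → G.Adj m d → G.Adj c d)
    (hN : IsIntervalOn G (S ∩ M)) (hS : IsIntervalOn G ((S \ M) ∪ {m})) :
    IsIntervalOn G S := by
  classical
  obtain ⟨l, r, hlr, h⟩ := hS
  obtain ⟨l', r', hlr', h'⟩ := hN
  have hmS : m ∈ (S \ M) ∪ {m} := Or.inr rfl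
  obtain ⟨p, hpm, hp⟩ : ∃ p, (l m ≤ p ∧ p ≤ r m) ∧
      ∀ c ∈ S \ M, G.Adj m c → l c ≤ p ∧ p ≤ r c := by
    obtain ⟨k, hk, hmax⟩ := Set.exists_max_image ({c | c ∈ S \ M ∧ G.Adj m c} ∪ {m}) l
      (Set.toFinite _) ⟨m, Or.inr rfl⟩
    refine ⟨l k, ⟨hmax m (Or.inr rfl), ?_⟩, fun c hc hmc => ⟨hmax c (Or.inl ⟨hc, hmc⟩), ?_⟩⟩
    · rcases hk with ⟨hkS, hkm⟩ | rfl
      · exact ((h m hmS k (Or.inl hkS) hkm.ne).1 hkm).2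
      · exact (hlr _).le
    · rcases hk with ⟨hkS, hkm⟩ | rfl
      · by_cases hkc : k = c
        · exact hkc ▸ (hlr k).le
        · exact ((h k (Or.inl hkS) c (Or.inl hc) hkc).1 (hclique k hkS c hc hkc hkm hmc)).1
      · exact ((h k hmS c (Or.inl hc) hmc.ne).1 hmc).1
  obtain ⟨ε₁, hε₁, h₁⟩ := exists_pos_forall_lt_of_finite fun q : α × α => l q.2 - r q.1
  obtain ⟨ε₂, hε₂, h₂⟩ := exists_pos_forall_lt_of_finite fun x => l x - p
  obtain ⟨ε₃, hε₃, h₃⟩ := exists_pos_forall_lt_of_finite fun x => p - r x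
  obtain ⟨ε, hε, hle₁, hle₂, hle₃⟩ : ∃ ε > 0, ε ≤ ε₁ ∧ ε ≤ ε₂ ∧ ε ≤ ε₃ :=
    ⟨min ε₁ (min ε₂ ε₃), by positivity, by simp, by simp, by simp⟩
  obtain ⟨δ, hδ, hδl, hδr⟩ : ∃ δ > 0, (∀ x, -ε ≤ δ * l' x) ∧ ∀ x, δ * r' x ≤ ε := by
    obtain ⟨R, hR⟩ := (Set.finite_range fun x => max |l' x| |r' x|).bddAbove
    have hR' : ∀ x, |l' x| ≤ R ∧ |r' x| ≤ R := fun x => max_le_iff.1 (hR ⟨x, rfl⟩)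
    have hR0 : 0 ≤ R := (abs_nonneg _).trans (hR' m).1
    have key : ∀ t, |t| ≤ R → |ε / (R + 1) * t| ≤ ε := fun t ht => by
      rw [abs_mul, abs_of_pos (by positivity), div_mul_eq_mul_div, div_le_iff₀ (by positivity)]
      nlinarith
    exact ⟨ε / (R + 1), by positivity, fun x => (abs_le.1 (key _ (hR' x).1)).1,
      fun x => (abs_le.1 (key _ (hR' x).2)).2⟩
  have hmixed : ∀ x ∈ M, ∀ y ∈ S \ M,
      (G.Adj x y ↔ p + δ * l' x ≤ r y + ε ∧ l y - ε ≤ p + δ * r' x) := by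
    intro x hx y hy
    have hmy : m ≠ y := fun e => hy.2 (e ▸ hm)
    have hlt := mul_lt_mul_of_pos_left (hlr' x) hδ
    rw [hM x hx m hm y hy.2]
    constructor
    · intro hadj
      have := hp y hy hadj
      constructor <;> linarith [hδl x, hδr x]
    · intro hxy
      rw [h m hmS y (Or.inl hy) hmy]
      by_contra hcon
      rw [not_and_or, not_le, not_le] at hcon
      rcases hcon with hcon | hcon
      · linarith [h₃ y (by linarith), hδl x]
      · linarith [h₂ y (by linarith), hδr x]
  refine ⟨fun x => if x ∈ M then p + δ * l' x else l x - ε,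
    fun x => if x ∈ M then p + δ * r' x else r x + ε, fun x => ?_, fun x hx y hy hxy => ?_⟩
  · dsimp only
    split_ifs
    · linarith [mul_lt_mul_of_pos_left (hlr' x) hδ]
    · linarith [hlr x]
  · by_cases hxM : x ∈ M <;> by_cases hyM : y ∈ M <;> simp only [hxM, hyM, if_true, if_false]
    · rw [h' x ⟨hx, hxM⟩ y ⟨hy, hyM⟩ hxy, add_le_add_iff_left, add_le_add_iff_left,
        mul_le_mul_iff_right₀ hδ, mul_le_mul_iff_right₀ hδ]
    · exact hmixed x hxM y ⟨hy, hyM⟩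
    · rw [G.adj_comm, hmixed y hyM x ⟨hx, hxM⟩, and_comm]
    · rw [h x (Or.inl ⟨hx, hxM⟩) y (Or.inl ⟨hy, hyM⟩) hxy]
      constructor
      · rintro ⟨h1, h2⟩
        constructor <;> linarith
      · rintro ⟨h1, h2⟩
        constructor <;> by_contra hcon
        · have := h₁ (y, x) (by dsimp only; linarith)
          dsimp only at this
          linarith
        · have := h₁ (x, y) (by dsimp only; linarith)
          dsimp only at this
          linarith

/-- Replacing the only vertex in a module by another vertex of the module does not affect being
an interval graph. -/
theorem of_replace (hM : IsModule G M) {u v : α} (hu : u ∈ M) (hv : v ∈ M)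
    (hS : S ∩ M ⊆ {u}) (h : IsIntervalOn G ((S \ M) ∪ {v})) : IsIntervalOn G S := by
  classical
  have hSM : ∀ x ∈ S, x ≠ u → x ∉ M := fun x hx hxu hxM => hxu (hS ⟨hx, hxM⟩)
  refine h.of_injOn (f := fun x => if x = u then v else x) (fun x hx => ?_)
    (fun x hx y hy hxy => ?_) fun x hx y hy => ?_
  · by_cases hxu : x = u
    · simp [hxu]
    · simp [hxu, hx, hSM x hx hxu]
  · by_cases hxu : x = u <;> by_cases hyu : y = u <;>
      simp only [hxu, hyu, if_true, if_false] at hxy ⊢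
    · exact absurd (hxy ▸ hv) (hSM y hy hyu)
    · exact absurd (hxy ▸ hv) (hSM x hx hxu)
    · exact hxy
  · by_cases hxu : x = u <;> by_cases hyu : y = u <;> simp only [hxu, hyu, if_true, if_false]
    · simp
    · exact hM u hu v hv y (hSM y hy hyu)
    · rw [G.adj_comm x u, G.adj_comm x v]
      exact hM u hu v hv x (hSM x hx hxu)

end IsIntervalOn

/-- Let `(A, X, B)` be a tri-separation of `G` and let `M ⊆ B` be a module of `G`.
If `G[X ∪ B]` is an interval graph, then every obstruction in `G` contains at most one
vertex of `M`; moreover, for every obstruction `S` intersecting `M` and every `v ∈ M`,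
the set `(S \ M) ∪ {v}` is also an obstruction. -/
theorem obstruction_meets_module_in_le_one {α : Type} [Fintype α] (G : SimpleGraph α)
    (A X B : Set α)
    (hcover : A ∪ X ∪ B = Set.univ)
    (hAX : Disjoint A X) (hAB : Disjoint A B) (hXB : Disjoint X B)
    (hsep : ∀ a ∈ A, ∀ b ∈ B, ¬ G.Adj a b)
    (M : Set α) (hMB : M ⊆ B) (hmod : IsModule G M)
    (hint : IsIntervalGraph (G.induce (X ∪ B))) :
    (∀ S : Set α, IsObstruction G S → (S ∩ M).ncard ≤ 1) ∧
    (∀ S : Set α, IsObstruction G S → (S ∩ M).Nonempty →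
      ∀ v ∈ M, IsObstruction G ((S \ M) ∪ {v})) := by
  have hintB : IsIntervalOn G (X ∪ B) := isIntervalGraph_induce_iff.1 hint
  have hle : ∀ S : Set α, IsObstruction G S → (S ∩ M).ncard ≤ 1 := by
    rintro S ⟨hS, hmin⟩
    simp only [isIntervalGraph_induce_iff] at hS hmin
    by_contra hcard
    obtain ⟨m, m', hm, hm', hne⟩ := (Set.one_lt_ncard_iff (Set.toFinite _)).1 (not_le.1 hcard)
    by_cases hclique : ∀ x ∈ S ∩ M, ∀ y ∈ S ∩ M, x ≠ y → G.Adj x y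
    · refine hS ((hmin _ (Set.sdiff_singleton_ssubset.2 hm'.1)).of_twin hm.1
        (hclique m hm m' hm' hne) fun w hw hwm hwm' => ?_)
      by_cases hwM : w ∈ M
      · exact iff_of_true (hclique _ hm' w ⟨hw, hwM⟩ hwm'.symm)
          (hclique _ hm w ⟨hw, hwM⟩ hwm.symm)
      · exact hmod m' hm'.2 m hm.2 w hwM
    · push Not at hclique
      obtain ⟨x, hx, y, hy, hxy, nxy⟩ := hclique
      have hnbr : ∀ c, G.Adj m c → c ∈ X ∪ B := fun c hc => by
        have hcu : c ∈ A ∪ X ∪ B := hcover ▸ Set.mem_univ c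
        rcases hcu with (hA | hX) | hB
        · exact absurd hc.symm (hsep c hA m (hMB hm.2))
        · exact Or.inl hX
        · exact Or.inr hB
      refine hS (IsIntervalOn.of_module hmod hm.2 (fun c hc d hd hcd hmc hmd => ?_)
        (hintB.mono fun z hz => Or.inr (hMB hz.2)) (hmin _ ⟨?_, fun hsub => ?_⟩))
      · by_contra ncd
        exact hintB.false_of_cycle (Or.inr (hMB hx.2)) (Or.inr (hMB hy.2)) (hnbr c hmc)
          (hnbr d hmd) hxy hcd nxy ncd
          ((hmod x hx.2 m hm.2 c hc.2).2 hmc) ((hmod x hx.2 m hm.2 d hd.2).2 hmd)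
          ((hmod y hy.2 m hm.2 c hc.2).2 hmc) ((hmod y hy.2 m hm.2 d hd.2).2 hmd)
      · exact Set.union_subset Set.sdiff_subset (Set.singleton_subset_iff.2 hm.1)
      · rcases hsub hm'.1 with h | h
        · exact h.2 hm'.2
        · exact hne h.symm
  refine ⟨hle, fun S hS ⟨m, hm⟩ v hv => ?_⟩
  have hSm : S ∩ M ⊆ {m} := fun x hx => (Set.ncard_le_one (Set.toFinite _)).1 (hle S hS) x hx m hm
  obtain ⟨hS, hmin⟩ := hS
  simp only [IsObstruction, isIntervalGraph_induce_iff] at hS hmin ⊢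
  refine ⟨fun h => hS (h.of_replace hmod hm.2 hv hSm), fun T hT => ?_⟩
  have hTM : T \ M ⊆ S \ M := fun x hx => by
    rcases hT.1 hx.1 with h | h
    · exact h
    · exact absurd (h ▸ hv) hx.2
  by_cases hvT : v ∈ T
  · refine IsIntervalOn.of_replace hmod hv hm.2 (fun x hx => ?_) (hmin _ ⟨?_, fun hsub => ?_⟩)
    · exact (hT.1 hx.1).resolve_left fun h => h.2 hx.2
    · exact Set.union_subset (hTM.trans Set.sdiff_subset) (Set.singleton_subset_iff.2 hm.1)
    · refine hT.2 (Set.union_subset (fun x hx => ?_) (Set.singleton_subset_iff.2 hvT))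
      rcases hsub hx.1 with h | h
      · exact h.1
      · exact absurd (h ▸ hm.2) hx.2
  · refine hmin T ⟨fun x hx => ?_, fun hsub => ?_⟩
    · rcases hT.1 hx with h | h
      · exact h.1
      · exact absurd (h ▸ hx) hvT
    · rcases hT.1 (hsub hm.1) with h | h
      · exact h.2 hm.2
      · exact hvT (h ▸ hsub hm.1)
end
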